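/- arXiv:2007.08914 — 8 statements merged into one kernel-verified Lean document; each statement's English description precedes it below -/
import Mathlib

section
/- Let G = (V, E) be a finite directed acyclic graph with n vertices and let ℓ be an integer with 1 ≤ ℓ ≤ n. Then the vertex set V can be partitioned into pairwise disjoint sets P_1, …, P_a, Q_1, …, Q_b whose union is V, where each P_i is a chain of G, each Q_j is an antichain of G, a ≤ ℓ, and b ≤ 2·⌈n/ℓ⌉. -/
/-- A chain of the DAG `(V, E)`: a set of vertices that is traced out by a
directed path (a duplicate-free list whose consecutive elements are joined by edges). -/
def IsDagChain {V : Type*} (E : V → V → Prop) (S : Set V) : Prop :=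
  ∃ l : List V, l.Nodup ∧ l.Chain' E ∧ {x | x ∈ l} = S

/-- An antichain of the DAG `(V, E)`: a set of vertices with no edge between any two of them. -/
def IsDagAntichain {V : Type*} (E : V → V → Prop) (S : Set V) : Prop :=
  ∀ x ∈ S, ∀ y ∈ S, ¬ E x y

/-- Mirsky-type layering: if no directed path in `S` has `k + 1` vertices,
then `S` has a proper colouring with `k` colours. -/
theorem layer_coloring {V : Type*} (E : V → V → Prop) (k : ℕ) : ∀ S : Set V,
    (∀ l : List V, l.IsChain E → (∀ x ∈ l, x ∈ S) → l.length ≠ k + 1) →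
    ∃ c : V → ℕ, (∀ v ∈ S, c v < k) ∧ ∀ u ∈ S, ∀ v ∈ S, E u v → c u ≠ c v := by
  classical
  induction k with
  | zero =>
    intro S h
    have hS : ∀ v, v ∉ S := fun v hv => h [v] (by simp) (by simpa using hv) (by simp)
    exact ⟨fun _ => 0, fun v hv => (hS v hv).elim, fun v hv => (hS v hv).elim⟩
  | succ k ih =>
    intro S h
    obtain ⟨c, hc1, hc2⟩ := ih {v | v ∈ S ∧ ∃ u ∈ S, E u v} (by
      intro l hl hlS hlen
      match l, hlen with
      | v :: t, hlen =>
        obtain ⟨hv, u, hu, huv⟩ := hlS v (by simp)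
        refine h (u :: v :: t) ?_ ?_ ?_
        · simpa [List.isChain_cons_cons] using ⟨huv, hl⟩
        · intro x hx
          rcases List.mem_cons.1 hx with rfl | hx
          · exact hu
          · exact (hlS x hx).1
        · simpa using hlen)
    refine ⟨fun v => if ∃ u ∈ S, E u v then c v else k, ?_, ?_⟩
    · intro v hv
      by_cases hp : ∃ u ∈ S, E u v
      · simp only [if_pos hp]
        have := hc1 v ⟨hv, hp⟩
        omega
      · simp only [if_neg hp]
        omega
    · intro u hu v hv huv
      have hpv : ∃ u ∈ S, E u v := ⟨u, hu, huv⟩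
      simp only [if_pos hpv]
      have h1 := hc1 v ⟨hv, hpv⟩
      by_cases hp : ∃ w ∈ S, E w u
      · simp only [if_pos hp]
        exact hc2 u ⟨hu, hp⟩ v ⟨hv, hpv⟩ huv
      · simp only [if_neg hp]
        omega

theorem nodup_of_path {V : Type*} {E : V → V → Prop}
    (hacyc : ∀ v : V, ¬ Relation.TransGen E v v) {l : List V} (hl : l.IsChain E) :
    l.Nodup := by
  have h1 : l.IsChain (Relation.TransGen E) := hl.imp (fun _ _ h => Relation.TransGen.single h)
  have h2 : l.Pairwise (Relation.TransGen E) := List.isChain_iff_pairwise.1 h1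
  refine h2.imp ?_
  rintro a b hab rfl
  exact hacyc a hab

/-- Greedy removal of paths with `k` vertices. -/
theorem greedy_coloring {V : Type*} (E : V → V → Prop)
    (hacyc : ∀ v : V, ¬ Relation.TransGen E v v) (k m : ℕ) : ∀ S : Finset V,
    S.card ≤ m * k →
    ∃ c : V → ℕ ⊕ ℕ, (∀ v ∈ S, ∀ i, c v = Sum.inl i → i < m) ∧
      (∀ v ∈ S, ∀ j, c v = Sum.inr j → j < k) ∧
      (∀ i, IsDagChain E {v | v ∈ S ∧ c v = Sum.inl i}) ∧
      (∀ u ∈ S, ∀ v ∈ S, E u v → ∀ j, c u = Sum.inr j → c v ≠ Sum.inr j) := by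
  classical
  induction m with
  | zero =>
    intro S hS
    have hS : S = ∅ := by simpa using hS
    subst hS
    exact ⟨fun _ => Sum.inl 0, by simp, by simp, fun i => ⟨[], by simp, List.IsChain.nil, by simp⟩,
      by simp⟩
  | succ m ih =>
    intro S hS
    by_cases hex : ∃ l : List V, l.IsChain E ∧ (∀ x ∈ l, x ∈ S) ∧ l.length = k
    · obtain ⟨l, hl, hlS, hlen⟩ := hex
      have hnd := nodup_of_path hacyc hl
      have hcard : (S \ l.toFinset).card ≤ m * k := by
        rw [Finset.card_sdiff_of_subset (by intro x hx; exact hlS x (by simpa using hx)),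
          List.toFinset_card_of_nodup hnd, hlen]
        rw [Nat.succ_mul] at hS
        omega
      obtain ⟨c, h1, h2, h3, h4⟩ := ih _ hcard
      have hmem : ∀ v ∈ S, v ∉ l → v ∈ S \ l.toFinset := by
        intro v hv hvl
        simp [hv, hvl]
      refine ⟨fun v => if v ∈ l then Sum.inl m else c v, ?_, ?_, ?_, ?_⟩
      · intro v hv i hi
        by_cases hvl : v ∈ l
        · simp only [if_pos hvl, Sum.inl.injEq] at hi
          omega
        · simp only [if_neg hvl] at hi
          have := h1 v (hmem v hv hvl) i hi
          omega
      · intro v hv j hj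
        by_cases hvl : v ∈ l
        · simp [if_pos hvl] at hj
        · simp only [if_neg hvl] at hj
          exact h2 v (hmem v hv hvl) j hj
      · intro i
        by_cases him : i = m
        · subst him
          refine ⟨l, hnd, hl, ?_⟩
          ext v
          simp only [Set.mem_setOf_eq]
          constructor
          · intro hv
            exact ⟨hlS v hv, by simp [hv]⟩
          · rintro ⟨hv, hcv⟩
            by_contra hvl
            simp only [if_neg hvl] at hcv
            exact absurd (h1 v (hmem v hv hvl) i hcv) (lt_irrefl _)
        · convert h3 i using 1
          ext v
          by_cases hvl : v ∈ l
          · simp [hvl, Ne.symm him]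
          · simp [hvl]
      · intro u hu v hv huv j hj hj'
        by_cases hul : u ∈ l
        · simp [hul] at hj
        by_cases hvl : v ∈ l
        · simp [hvl] at hj'
        simp only [if_neg hul] at hj
        simp only [if_neg hvl] at hj'
        exact h4 u (hmem u hu hul) v (hmem v hv hvl) huv j hj hj'
    · obtain ⟨c, h1, h2⟩ := layer_coloring E k (S : Set V) (by
        intro l hl hlS hlen
        refine hex ⟨l.tail, hl.tail, ?_, by simp [hlen]⟩
        intro x hx
        exact hlS x (List.mem_of_mem_tail hx))
      refine ⟨fun v => Sum.inr (c v), by simp, ?_, ?_, ?_⟩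
      · intro v hv j hj
        have := h1 v hv
        simp only [Sum.inr.injEq] at hj
        omega
      · intro i
        exact ⟨[], by simp, List.IsChain.nil, by simp⟩
      · intro u hu v hv huv j hj hj'
        simp only [Sum.inr.injEq] at hj hj'
        exact h2 u hu v hv huv (hj.trans hj'.symm)

theorem stmt0 {V : Type*} [Fintype V] (E : V → V → Prop)
    (hacyc : ∀ v : V, ¬ Relation.TransGen E v v)
    (n : ℕ) (hn : Fintype.card V = n)
    (ℓ : ℕ) (hℓ1 : 1 ≤ ℓ) (hℓn : ℓ ≤ n) :
    ∃ (a b : ℕ) (P : Fin a → Set V) (Q : Fin b → Set V),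
      a ≤ ℓ ∧ b ≤ 2 * ((n + ℓ - 1) / ℓ) ∧
      (∀ i, IsDagChain E (P i)) ∧
      (∀ j, IsDagAntichain E (Q j)) ∧
      (∀ i j, i ≠ j → Disjoint (P i) (P j)) ∧
      (∀ i j, i ≠ j → Disjoint (Q i) (Q j)) ∧
      (∀ i j, Disjoint (P i) (Q j)) ∧
      ((⋃ i, P i) ∪ (⋃ j, Q j)) = Set.univ := by
  classical
  have hk : n ≤ ℓ * ((n + ℓ - 1) / ℓ) := by
    have h1 := Nat.div_add_mod (n + ℓ - 1) ℓ
    have h2 := Nat.mod_lt (n + ℓ - 1) hℓ1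
    omega
  generalize (n + ℓ - 1) / ℓ = k at hk ⊢
  obtain ⟨c, h1, h2, h3, h4⟩ := greedy_coloring E hacyc k ℓ Finset.univ
    (by rw [Finset.card_univ, hn]; exact hk)
  refine ⟨ℓ, k, fun i => {v | v ∈ Finset.univ ∧ c v = Sum.inl (i : ℕ)},
    fun j => {v | c v = Sum.inr (j : ℕ)}, le_refl _, by omega, fun i => h3 i, ?_, ?_, ?_, ?_, ?_⟩
  · intro j x hx y hy hxy
    exact h4 x (Finset.mem_univ _) y (Finset.mem_univ _) hxy j hx hy
  · intro i j hij
    refine Set.disjoint_left.2 fun v hv hv' => hij (Fin.ext ?_)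
    exact Sum.inl.inj (hv.2.symm.trans hv'.2)
  · intro i j hij
    refine Set.disjoint_left.2 fun v hv hv' => hij (Fin.ext ?_)
    exact Sum.inr.inj (Eq.trans (Eq.symm hv) hv')
  · intro i j
    refine Set.disjoint_left.2 fun v hv hv' => ?_
    have := hv.2.symm.trans hv'
    simp at this
  · refine Set.eq_univ_of_forall fun v => ?_
    rcases hcv : c v with i | j
    · exact Or.inl (Set.mem_iUnion.2 ⟨⟨i, h1 v (Finset.mem_univ _) i hcv⟩, Finset.mem_univ _, hcv⟩)
    · exact Or.inr (Set.mem_iUnion.2 ⟨⟨j, h2 v (Finset.mem_univ _) j hcv⟩, hcv⟩)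
end

section
/- Let G = (V, E) be a finite directed acyclic graph with n vertices and let ℓ be an integer with 1 ≤ ℓ ≤ n. Then the vertex set V can be partitioned into at most ℓ chains of G together with at most ⌊n/ℓ⌋ antichains of G. (This is achieved by greedily removing a longest chain ℓ times: every chain of the remaining graph has at most n/ℓ vertices, so the remainder can be covered by ⌊n/ℓ⌋ antichains.) -/
theorem aux_nodup {V : Type*} (E : V → V → Prop)
    (hacyc : ∀ v : V, ¬ Relation.TransGen E v v) (l : List V) (h : l.IsChain E) : l.Nodup := by
  have h1 : l.IsChain (Relation.TransGen E) := h.imp (fun _ _ hab => Relation.TransGen.single hab)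
  have h2 : l.Pairwise (Relation.TransGen E) := List.isChain_iff_pairwise.mp h1
  refine List.Pairwise.imp ?_ h2
  intro a b hab heq
  subst heq
  exact hacyc _ hab

theorem aux_greedy {V : Type*} [Fintype V] [DecidableEq V] (E : V → V → Prop)
    (hacyc : ∀ v : V, ¬ Relation.TransGen E v v) (ℓ : ℕ) :
    ∃ (R : Finset V) (P : Fin ℓ → Finset V),
      (∀ i, ∃ l : List V, l.Nodup ∧ l.IsChain E ∧ l.toFinset = P i) ∧
      (∀ i j, i ≠ j → Disjoint (P i) (P j)) ∧
      (∀ i, Disjoint (P i) R) ∧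
      (∀ v, v ∈ R ∨ ∃ i, v ∈ P i) ∧
      (∀ l : List V, l.IsChain E → (∀ x ∈ l, x ∈ R) → ∀ i, l.length ≤ (P i).card) := by
  induction ℓ with
  | zero =>
    exact ⟨Finset.univ, fun i => i.elim0, fun i => i.elim0, fun i => i.elim0, fun i => i.elim0,
      by simp, fun _ _ _ i => i.elim0⟩
  | succ k ih =>
    obtain ⟨R, P, h1, h2, h3, h4, h5⟩ := ih
    have hex : ∃ c : List V, (c.IsChain E ∧ ∀ x ∈ c, x ∈ R) ∧
        ∀ l : List V, l.IsChain E → (∀ x ∈ l, x ∈ R) → l.length ≤ c.length := by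
      let p : ℕ → Prop := fun m => ∃ c : List V, (c.IsChain E ∧ ∀ x ∈ c, x ∈ R) ∧ c.length = m
      classical
      have hb : ∀ m, p m → m ≤ Fintype.card V := by
        rintro m ⟨c, ⟨hc, -⟩, rfl⟩
        exact (aux_nodup E hacyc c hc).length_le_card
      have h0 : p 0 := ⟨[], by simp, rfl⟩
      obtain ⟨c, hc, hl⟩ := Nat.findGreatest_spec (P := p) (Nat.zero_le (Fintype.card V)) h0
      refine ⟨c, hc, fun l hl1 hl2 => ?_⟩
      rw [hl]
      exact Nat.le_findGreatest (hb _ ⟨l, ⟨hl1, hl2⟩, rfl⟩) ⟨l, ⟨hl1, hl2⟩, rfl⟩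
    obtain ⟨c, ⟨hc, hcR⟩, hmax⟩ := hex
    have hnd := aux_nodup E hacyc c hc
    have hsub : c.toFinset ⊆ R := fun x hx => hcR x (List.mem_toFinset.mp hx)
    refine ⟨R \ c.toFinset, Fin.cons c.toFinset P, ?_, ?_, ?_, ?_, ?_⟩
    · intro i
      refine Fin.cases ?_ (fun i => ?_) i
      · exact ⟨c, hnd, hc, rfl⟩
      · simpa using h1 i
    · intro i j
      refine Fin.cases ?_ (fun i => ?_) i <;> refine Fin.cases ?_ (fun j => ?_) j
      · simp
      · intro _
        simpa only [Fin.cons_zero, Fin.cons_succ] using (Finset.disjoint_of_subset_right hsub (h3 j)).symm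
      · intro _
        simpa only [Fin.cons_zero, Fin.cons_succ] using Finset.disjoint_of_subset_right hsub (h3 i)
      · intro hij
        simpa only [Fin.cons_succ] using h2 i j (fun h => hij (by rw [h]))
    · intro i
      refine Fin.cases ?_ (fun i => ?_) i
      · simpa only [Fin.cons_zero] using Finset.disjoint_sdiff
      · simpa only [Fin.cons_succ] using Finset.disjoint_of_subset_right Finset.sdiff_subset (h3 i)
    · intro v
      rcases h4 v with h | ⟨i, h⟩
      · by_cases hv : v ∈ c.toFinset
        · exact Or.inr ⟨0, by simpa only [Fin.cons_zero] using hv⟩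
        · exact Or.inl (Finset.mem_sdiff.mpr ⟨h, hv⟩)
      · exact Or.inr ⟨i.succ, by simpa only [Fin.cons_succ] using h⟩
    · intro l hl hlR i
      have hlR' : ∀ x ∈ l, x ∈ R := fun x hx => (Finset.mem_sdiff.mp (hlR x hx)).1
      refine Fin.cases ?_ (fun i => ?_) i
      · simp only [Fin.cons_zero]
        rw [List.toFinset_card_of_nodup hnd]
        exact hmax l hl hlR'
      · simpa only [Fin.cons_succ] using h5 l hl hlR' i

theorem stmt1 {V : Type*} [Fintype V] (E : V → V → Prop)
    (hacyc : ∀ v : V, ¬ Relation.TransGen E v v)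
    (n : ℕ) (hn : Fintype.card V = n)
    (ℓ : ℕ) (hℓ1 : 1 ≤ ℓ) (hℓn : ℓ ≤ n) :
    ∃ (a b : ℕ) (P : Fin a → Set V) (Q : Fin b → Set V),
      a ≤ ℓ ∧ b ≤ n / ℓ ∧
      (∀ i, IsDagChain E (P i)) ∧
      (∀ j, IsDagAntichain E (Q j)) ∧
      (∀ i j, i ≠ j → Disjoint (P i) (P j)) ∧
      (∀ i j, i ≠ j → Disjoint (Q i) (Q j)) ∧
      (∀ i j, Disjoint (P i) (Q j)) ∧
      ((⋃ i, P i) ∪ (⋃ j, Q j)) = Set.univ := by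
  classical
  obtain ⟨R, P, h1, h2, h3, h4, h5⟩ := aux_greedy E hacyc ℓ
  have hlen : ∀ l : List V, l.IsChain E → (∀ x ∈ l, x ∈ R) → l.length ≤ n / ℓ := by
    intro l hl hlR
    rw [Nat.le_div_iff_mul_le hℓ1]
    calc l.length * ℓ = ∑ _i : Fin ℓ, l.length := by simp [mul_comm]
      _ ≤ ∑ i : Fin ℓ, (P i).card := Finset.sum_le_sum (fun i _ => h5 l hl hlR i)
      _ = (Finset.univ.biUnion P).card :=
        (Finset.card_biUnion (fun i _ j _ hij => h2 i j hij)).symm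
      _ ≤ n := hn ▸ Finset.card_le_univ _
  let p : V → ℕ → Prop := fun v m =>
    ∃ l : List V, (v :: l).IsChain E ∧ (∀ x ∈ v :: l, x ∈ R) ∧ l.length = m
  let h : V → ℕ := fun v => Nat.findGreatest (p v) (n / ℓ)
  have hp : ∀ v m, p v m → m < n / ℓ := by
    rintro v m ⟨l, hl, hlR, rfl⟩
    have := hlen _ hl hlR
    simpa using this
  have hspec : ∀ v ∈ R, p v (h v) := by
    intro v hv
    exact Nat.findGreatest_spec (P := p v) (Nat.zero_le _) ⟨[], by simp, by simpa using hv, rfl⟩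
  refine ⟨ℓ, n / ℓ, fun i => (P i : Set V), fun j => {v | v ∈ R ∧ h v = j}, le_rfl, le_rfl,
    ?_, ?_, ?_, ?_, ?_, ?_⟩
  · intro i
    obtain ⟨l, hl1, hl2, hl3⟩ := h1 i
    refine ⟨l, hl1, hl2, ?_⟩
    ext x
    simp [← hl3]
  · rintro j x ⟨hx, hxj⟩ y ⟨hy, hyj⟩ hxy
    obtain ⟨l, hl, hlR, hll⟩ := hspec y hy
    have hpx : p x (h y + 1) := by
      refine ⟨y :: l, List.isChain_cons_cons.mpr ⟨hxy, hl⟩, ?_, by simp [hll]⟩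
      intro z hz
      rcases List.mem_cons.mp hz with rfl | hz
      · exact hx
      · exact hlR z hz
    have : h y + 1 ≤ h x := Nat.le_findGreatest (hp _ _ hpx).le hpx
    omega
  · intro i j hij
    exact Finset.disjoint_coe.mpr (h2 i j hij)
  · intro i j hij
    rw [Set.disjoint_left]
    rintro x ⟨_, hi⟩ ⟨_, hj⟩
    exact hij (Fin.ext (hi.symm.trans hj))
  · intro i j
    rw [Set.disjoint_left]
    rintro x hx ⟨hxR, _⟩
    exact Finset.disjoint_left.mp (h3 i) hx hxR
  · rw [Set.eq_univ_iff_forall]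
    intro v
    rcases h4 v with hv | ⟨i, hv⟩
    · exact Or.inr (Set.mem_iUnion.mpr ⟨⟨h v, hp _ _ (hspec v hv)⟩, hv, rfl⟩)
    · exact Or.inl (Set.mem_iUnion.mpr ⟨i, hv⟩)
end

section
/- Let < be a strict partial order on a finite set V and let W ⊆ V be a set that is the union of q' pairwise disjoint antichains. Then W can be partitioned into q pairwise disjoint antichains Q_1, …, Q_q such that the family Q_1, …, Q_q is path-respecting, q equals the maximum number of elements of a chain contained in W, and q ≤ q'. -/
theorem stmt3 {V : Type*} [Fintype V] [PartialOrder V]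
    (W : Set V) (q' : ℕ) (A : Fin q' → Set V)
    (hAdisj : ∀ i j, i ≠ j → Disjoint (A i) (A j))
    (hAanti : ∀ i, IsAntichain (· < ·) (A i))
    (hW : W = ⋃ i, A i) :
    ∃ (q : ℕ) (Q : Fin q → Set V),
      (∀ i j, i ≠ j → Disjoint (Q i) (Q j)) ∧
      (∀ i, IsAntichain (· < ·) (Q i)) ∧
      (⋃ i, Q i) = W ∧
      (∀ (i j : Fin q) (x y : V), x ∈ Q i → y ∈ Q j → x < y → i < j) ∧
      (∃ C : Finset V, ↑C ⊆ W ∧ IsChain (· < ·) (C : Set V) ∧ C.card = q) ∧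
      (∀ C : Finset V, ↑C ⊆ W → IsChain (· < ·) (C : Set V) → C.card ≤ q) ∧
      q ≤ q' := by
  classical
  let F : Finset (Finset V) :=
    Finset.univ.filter (fun C => (C : Set V) ⊆ W ∧ IsChain (· < ·) (C : Set V))
  let G : V → Finset (Finset V) := fun x => F.filter (fun C => ∀ c ∈ C, c < x)
  let h : V → ℕ := fun x => (G x).sup Finset.card
  have hF : ∀ C : Finset V, C ∈ F ↔ ((C : Set V) ⊆ W ∧ IsChain (· < ·) (C : Set V)) := by
    intro C; simp [F]
  have hG : ∀ x (C : Finset V), C ∈ G x ↔ (C ∈ F ∧ ∀ c ∈ C, c < x) := by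
    intro x C; simp [G]
  have hE : (∅ : Finset V) ∈ F := by rw [hF]; simp
  have hGE : ∀ x, (∅ : Finset V) ∈ G x := by
    intro x; rw [hG]; exact ⟨hE, by simp⟩
  have key : ∀ x ∈ W, ∃ C ∈ F, (∀ c ∈ C, c ≤ x) ∧ C.card = h x + 1 := by
    intro x hx
    obtain ⟨C, hC, hCc⟩ := Finset.exists_mem_eq_sup (G x) ⟨_, hGE x⟩ Finset.card
    obtain ⟨hCF, hlt⟩ := (hG x C).1 hC
    obtain ⟨hCW, hch⟩ := (hF C).1 hCF
    refine ⟨insert x C, (hF _).2 ⟨?_, ?_⟩, ?_, ?_⟩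
    · rw [Finset.coe_insert]
      exact Set.insert_subset hx hCW
    · rw [Finset.coe_insert]
      exact hch.insert (fun b hb _ => Or.inr (hlt b hb))
    · intro c hc
      rcases Finset.mem_insert.1 hc with rfl | hc
      · exact le_rfl
      · exact (hlt c hc).le
    · rw [Finset.card_insert_of_notMem (fun hxC => lt_irrefl _ (hlt x hxC)), ← hCc]
  have hlt : ∀ x ∈ W, h x < F.sup Finset.card := by
    intro x hx
    obtain ⟨C, hC, -, hc⟩ := key x hx
    have := Finset.le_sup (f := Finset.card) hC
    omega
  have hmono : ∀ x ∈ W, ∀ y, x < y → h x < h y := by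
    intro x hx y hxy
    obtain ⟨C, hC, hle, hc⟩ := key x hx
    have : C.card ≤ h y := Finset.le_sup (f := Finset.card)
      ((hG y C).2 ⟨hC, fun c hc => (hle c hc).trans_lt hxy⟩)
    omega
  refine ⟨F.sup Finset.card, fun i => {x | x ∈ W ∧ h x = i}, ?_, ?_, ?_, ?_, ?_, ?_, ?_⟩
  · intro i j hij
    rw [Set.disjoint_left]
    rintro x ⟨_, hi⟩ ⟨_, hj⟩
    exact hij (Fin.ext (hi.symm.trans hj))
  · rintro i x ⟨hx, hi⟩ y ⟨hy, hj⟩ _ hxy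
    have := hmono x hx y hxy
    omega
  · ext x
    simp only [Set.mem_iUnion, Set.mem_setOf_eq]
    exact ⟨fun ⟨_, hx, _⟩ => hx, fun hx => ⟨⟨h x, hlt x hx⟩, hx, rfl⟩⟩
  · rintro i j x y ⟨hx, hi⟩ ⟨hy, hj⟩ hxy
    have := hmono x hx y hxy
    rw [Fin.lt_def]
    omega
  · obtain ⟨C, hC, hCc⟩ := Finset.exists_mem_eq_sup F ⟨_, hE⟩ Finset.card
    exact ⟨C, ((hF C).1 hC).1, ((hF C).1 hC).2, hCc.symm⟩
  · intro C h1 h2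
    exact Finset.le_sup (f := Finset.card) ((hF C).2 ⟨h1, h2⟩)
  · apply Finset.sup_le
    intro C hC
    obtain ⟨hCW, hch⟩ := (hF C).1 hC
    have hex : ∀ x : C, ∃ i, (x : V) ∈ A i := by
      intro x
      have := hCW x.2
      rw [hW] at this
      exact Set.mem_iUnion.1 this
    choose f hf using hex
    have hinj : Function.Injective f := by
      intro x y hxy
      by_contra hne
      have hne' : (x : V) ≠ y := fun e => hne (Subtype.ext e)
      have hy := hf y
      rw [← hxy] at hy
      rcases hch x.2 y.2 hne' with hl | hl
      · exact hAanti _ (hf x) hy hne' hl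
      · exact hAanti _ hy (hf x) hne'.symm hl
    simpa using Fintype.card_le_of_injective f hinj
end

section
/- Let < be a strict partial order on a finite set V and let Q_1, …, Q_q be a path-respecting family of pairwise disjoint antichains of (V, <). Then there exists a topological order φ of (V, <) that is Q-compact: the vertices of each Q_i occupy consecutive φ-positions (no vertex outside Q_i has a label strictly between two labels of vertices of Q_i), and every vertex of Q_i has a smaller φ-label than every vertex of Q_j whenever i < j. -/
theorem exists_level {V : Type*} [PartialOrder V]
    (q : ℕ) (Q : Fin q → Set V)
    (hQdisj : ∀ i j, i ≠ j → Disjoint (Q i) (Q j))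
    (hQpr : ∀ (i j : Fin q) (x y : V), x ∈ Q i → y ∈ Q j → x < y → i < j) :
    ∃ k : V → ℕ, Monotone k ∧ ∀ i v, v ∈ Q i ↔ k v = 2 * i.val + 1 := by
  classical
  let f : V → Fin q → ℕ := fun v i =>
    if ∃ x ∈ Q i, x < v then 2 * i.val + 2 else if v ∈ Q i then 2 * i.val + 1 else 0
  have hf : ∀ v i, f v i ≤ Finset.univ.sup (f v) := fun v i =>
    Finset.le_sup (f := f v) (Finset.mem_univ i)
  have h1 : ∀ i v, v ∈ Q i → ¬ ∃ x ∈ Q i, x < v := by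
    rintro i v hv ⟨x, hx, hxv⟩
    exact lt_irrefl _ (hQpr i i x v hx hv hxv)
  refine ⟨fun v => Finset.univ.sup (f v), ?_, ?_⟩
  · intro v w hvw
    apply Finset.sup_mono_fun
    intro i _
    rcases hvw.eq_or_lt with rfl | hlt
    · exact le_rfl
    · by_cases hw : ∃ x ∈ Q i, x < w
      · simp only [f, if_pos hw]
        split_ifs <;> omega
      · have a : ¬ ∃ x ∈ Q i, x < v := fun ⟨x, hx, h⟩ => hw ⟨x, hx, h.trans hlt⟩
        have b : v ∉ Q i := fun h => hw ⟨v, h, hlt⟩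
        simp [f, a, b]
  · intro i v
    constructor
    · intro hv
      apply le_antisymm
      · apply Finset.sup_le
        intro j _
        simp only [f]
        split_ifs with ha hb
        · obtain ⟨x, hx, hxv⟩ := ha
          have : j.val < i.val := hQpr j i x v hx hv hxv
          omega
        · by_cases hij : j = i
          · rw [hij]
          · exact absurd hv (Set.disjoint_left.1 (hQdisj j i hij) hb)
        · omega
      · have := hf v i
        simpa only [f, if_neg (h1 i v hv), if_pos hv] using this
    · intro hk
      have hne : (Finset.univ : Finset (Fin q)).Nonempty := ⟨i, Finset.mem_univ i⟩
      obtain ⟨j, _, hj⟩ := Finset.exists_mem_eq_sup _ hne (f v)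
      have hk' : f v j = 2 * i.val + 1 := hj ▸ hk
      simp only [f] at hk'
      split_ifs at hk' with ha hb
      · omega
      · have : j = i := Fin.ext (by omega)
        exact this ▸ hb

theorem exists_linear_ext (V : Type*) [Fintype V] [PartialOrder V] :
    ∃ e : V → ℕ, Function.Injective e ∧ Monotone e ∧ ∀ v, e v < Fintype.card V := by
  classical
  letI : Fintype (LinearExtension V) := ‹Fintype V›
  let o := Fintype.orderIsoFinOfCardEq (LinearExtension V) (k := Fintype.card V) rfl
  refine ⟨fun v => (o.symm (toLinearExtension v)).val, ?_, ?_, fun v => Fin.is_lt _⟩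
  · intro a b h
    exact o.symm.injective (Fin.ext h)
  · intro a b h
    exact o.symm.monotone (toLinearExtension.monotone h)

theorem stmt4 {V : Type*} [Fintype V] [PartialOrder V]
    (q : ℕ) (Q : Fin q → Set V)
    (hQdisj : ∀ i j, i ≠ j → Disjoint (Q i) (Q j))
    (hQanti : ∀ i, IsAntichain (· < ·) (Q i))
    (hQpr : ∀ (i j : Fin q) (x y : V), x ∈ Q i → y ∈ Q j → x < y → i < j) :
    ∃ φ : V → ℕ,
      Function.Injective φ ∧
      (∀ x y : V, x < y → φ x < φ y) ∧
      (∀ (i : Fin q) (x y z : V), x ∈ Q i → y ∈ Q i → z ∉ Q i →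
        ¬(φ x < φ z ∧ φ z < φ y)) ∧
      (∀ i j : Fin q, i < j → ∀ x ∈ Q i, ∀ y ∈ Q j, φ x < φ y) := by
  obtain ⟨k, kmono, hk⟩ := exists_level q Q hQdisj hQpr
  obtain ⟨e, einj, emono, elt⟩ := exists_linear_ext V
  have key : ∀ x y, k x < k y →
      k x * Fintype.card V + e x < k y * Fintype.card V + e y := by
    intro x y h
    have h2 := Nat.mul_le_mul_right (Fintype.card V) (Nat.succ_le_of_lt h)
    rw [Nat.succ_mul] at h2
    have := elt x
    omega
  have key2 : ∀ x y, k x * Fintype.card V + e x < k y * Fintype.card V + e y → k x ≤ k y := by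
    intro x y h
    by_contra hc
    have := key y x (not_le.1 hc)
    omega
  have inj : Function.Injective fun v => k v * Fintype.card V + e v := by
    intro x y h
    simp only at h
    rcases lt_trichotomy (k x) (k y) with h' | h' | h'
    · have := key x y h'
      omega
    · rw [h'] at h
      exact einj (by omega)
    · have := key y x h'
      omega
  refine ⟨fun v => k v * Fintype.card V + e v, inj, ?_, ?_, ?_⟩
  · intro x y h
    apply lt_of_le_of_ne
    · exact Nat.add_le_add (Nat.mul_le_mul_right _ (kmono h.le)) (emono h.le)
    · exact fun h' => h.ne (inj h')
  · rintro i x y z hx hy hz ⟨h, h'⟩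
    have a := key2 _ _ h
    have b := key2 _ _ h'
    rw [hk] at hx hy hz
    omega
  · intro i j hij x hx y hy
    apply key
    rw [hk] at hx hy
    have : i.val < j.val := hij
    omega
end

section
/- Let < be a strict partial order on a finite set V, let φ be a topological order of (V, <), and let P_1, …, P_p be pairwise disjoint chains whose union is a set W ⊆ V. Let u, v ∈ V have at least one common ancestor in W. For each index i such that both u and v have an ancestor in P_i, let w_i denote the <-minimum of (the <-greatest ancestor of u in P_i) and (the <-greatest ancestor of v in P_i). Then among all such candidates w_i, the one with the largest φ-label is a W-restricted LCA of (u, v). -/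
/-- `w` is a `W`-restricted LCA of `(u, v)`: `w ∈ W` is a common ancestor of `u` and `v`
and no proper descendant of `w` in `W` is a common ancestor of `u` and `v`. -/
def IsRestLCA {V : Type*} [PartialOrder V] (W : Set V) (u v w : V) : Prop :=
  w ∈ W ∧ w ≤ u ∧ w ≤ v ∧ ∀ w' ∈ W, w < w' → ¬(w' ≤ u ∧ w' ≤ v)

theorem stmt6 {V : Type*} [Fintype V] [PartialOrder V]
    (p : ℕ) (P : Fin p → Set V)
    (hPdisj : ∀ i j, i ≠ j → Disjoint (P i) (P j))
    (hPchain : ∀ i, IsChain (· < ·) (P i))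
    (W : Set V) (hW : W = ⋃ i, P i)
    (φ : V → ℕ) (hφinj : Function.Injective φ)
    (hφtopo : ∀ x y : V, x < y → φ x < φ y)
    (u v : V) (hca : ∃ x ∈ W, x ≤ u ∧ x ≤ v)
    -- `I` is the set of indices `i` such that both `u` and `v` have an ancestor in `P i`
    (I : Set (Fin p)) (hI : I = {i | (∃ x ∈ P i, x ≤ u) ∧ (∃ x ∈ P i, x ≤ v)})
    -- `gu i` is the `<`-greatest ancestor of `u` in `P i`, `gv i` that of `v`
    (gu gv : Fin p → V)
    (hgu : ∀ i ∈ I, gu i ∈ P i ∧ gu i ≤ u ∧ ∀ x ∈ P i, x ≤ u → x ≤ gu i)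
    (hgv : ∀ i ∈ I, gv i ∈ P i ∧ gv i ≤ v ∧ ∀ x ∈ P i, x ≤ v → x ≤ gv i)
    -- `w i` is the `<`-minimum of `gu i` and `gv i`
    (w : Fin p → V)
    (hw : ∀ i ∈ I, (w i = gu i ∨ w i = gv i) ∧ w i ≤ gu i ∧ w i ≤ gv i)
    -- `i₀` indexes the candidate with the largest `φ`-label
    (i₀ : Fin p) (hi₀ : i₀ ∈ I) (hmax : ∀ i ∈ I, φ (w i) ≤ φ (w i₀)) :
    IsRestLCA W u v (w i₀) := by
  have key : ∀ i ∈ I, w i ∈ P i ∧ w i ≤ u ∧ w i ≤ v := by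
    intro i hi
    obtain ⟨h1, h2, -⟩ := hgu i hi
    obtain ⟨h3, h4, -⟩ := hgv i hi
    obtain ⟨h5, h6, h7⟩ := hw i hi
    refine ⟨?_, h6.trans h2, h7.trans h4⟩
    rcases h5 with h | h
    · rw [h]; exact h1
    · rw [h]; exact h3
  obtain ⟨k1, k2, k3⟩ := key i₀ hi₀
  refine ⟨?_, k2, k3, ?_⟩
  · rw [hW]; exact Set.mem_iUnion.2 ⟨i₀, k1⟩
  · rintro x hx hlt ⟨hxu, hxv⟩
    rw [hW] at hx
    obtain ⟨j, hj⟩ := Set.mem_iUnion.1 hx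
    have hjI : j ∈ I := by
      rw [hI]; exact ⟨⟨x, hj, hxu⟩, ⟨x, hj, hxv⟩⟩
    have hxw : x ≤ w j := by
      rcases (hw j hjI).1 with h | h
      · rw [h]; exact (hgu j hjI).2.2 x hj hxu
      · rw [h]; exact (hgv j hjI).2.2 x hj hxv
    exact absurd (hmax j hjI) (not_le.2 (hφtopo _ _ (lt_of_lt_of_le hlt hxw)))
end

section
/- Let < be a strict partial order on a finite set V and let P_1, …, P_p be pairwise disjoint chains whose union is a set W ⊆ V. Let u, v ∈ V and suppose w is a W-restricted LCA of (u, v). Then w belongs to some chain P_i, and w is the <-greatest common ancestor of u and v in P_i; equivalently, w equals the <-minimum of (the <-greatest ancestor of u in P_i) and (the <-greatest ancestor of v in P_i). -/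
theorem stmt7 {V : Type*} [Fintype V] [PartialOrder V]
    (p : ℕ) (P : Fin p → Set V)
    (hPdisj : ∀ i j, i ≠ j → Disjoint (P i) (P j))
    (hPchain : ∀ i, IsChain (· < ·) (P i))
    (W : Set V) (hW : W = ⋃ i, P i)
    (u v w : V) (hw : IsRestLCA W u v w) :
    ∃ i : Fin p, w ∈ P i ∧
      -- `w` is the `<`-greatest common ancestor of `u` and `v` in `P i`
      (∀ x ∈ P i, x ≤ u → x ≤ v → x ≤ w) ∧
      -- equivalently, `w` is the `<`-minimum of the greatest ancestor of `u` in `P i`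
      -- and the greatest ancestor of `v` in `P i`
      (∀ gu gv : V,
        (gu ∈ P i ∧ gu ≤ u ∧ ∀ x ∈ P i, x ≤ u → x ≤ gu) →
        (gv ∈ P i ∧ gv ≤ v ∧ ∀ x ∈ P i, x ≤ v → x ≤ gv) →
        ((w = gu ∨ w = gv) ∧ w ≤ gu ∧ w ≤ gv)) := by
  obtain ⟨hwW, hwu, hwv, hmax⟩ := hw
  subst hW
  obtain ⟨i, hi⟩ := Set.mem_iUnion.1 hwW
  have key : ∀ x ∈ P i, x ≤ u → x ≤ v → x ≤ w := by
    intro x hx hxu hxv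
    by_cases h : x = w
    · exact h.le
    · rcases hPchain i hx hi h with h1 | h1
      · exact h1.le
      · exact absurd ⟨hxu, hxv⟩ (hmax x (Set.mem_iUnion.2 ⟨i, hx⟩) h1)
  refine ⟨i, hi, key, ?_⟩
  rintro gu gv ⟨hgu, hguu, hgum⟩ ⟨hgv, hgvv, hgvm⟩
  have h1 := hgum w hi hwu
  have h2 := hgvm w hi hwv
  refine ⟨?_, h1, h2⟩
  by_cases h : gu = gv
  · exact Or.inl (le_antisymm h1 (key gu hgu hguu (h ▸ hgvv)))
  · rcases hPchain i hgu hgv h with h3 | h3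
    · exact Or.inl (le_antisymm h1 (key gu hgu hguu (h3.le.trans hgvv)))
    · exact Or.inr (le_antisymm h2 (key gv hgv (h3.le.trans hguu) hgvv))
end

section
/- Let < be a strict partial order on a finite set V whose elements are partitioned into two sets W_P and W_Q, where W_P is a union of pairwise disjoint chains and W_Q is the union of a path-respecting family Q_1, …, Q_q of pairwise disjoint antichains. Let φ be a Q-compact topological order of (V, <). Let u, v ∈ V have at least one common ancestor in V. Define candidates as follows: if u and v have a common ancestor in W_P, let w_P be the common ancestor of u and v in W_P with the largest φ-label; if u and v have a common ancestor in W_Q, let i be the largest index such that Q_i contains a common ancestor of u and v and let w_Q be any common ancestor of u and v in Q_i. Then at least one candidate is defined, and among the defined candidates, the one with the larger φ-label is an LCA of (u, v) in (V, <). -/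
/-- `w` is an LCA of `(u, v)` in `(V, <)`: `w` is a common ancestor of `u` and `v`
and no proper descendant of `w` is a common ancestor of `u` and `v`. -/
def IsLCA {V : Type*} [PartialOrder V] (u v w : V) : Prop :=
  w ≤ u ∧ w ≤ v ∧ ∀ w' : V, w < w' → ¬(w' ≤ u ∧ w' ≤ v)

theorem stmt9 {V : Type*} [Fintype V] [PartialOrder V]
    (WP WQ : Set V) (hpart : WP ∪ WQ = Set.univ) (hdisjPQ : Disjoint WP WQ)
    -- `WP` is the union of a family of pairwise disjoint chains
    (p : ℕ) (P : Fin p → Set V)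
    (hPdisj : ∀ i j, i ≠ j → Disjoint (P i) (P j))
    (hPchain : ∀ i, IsChain (· < ·) (P i))
    (hPU : (⋃ i, P i) = WP)
    -- `WQ` is the union of a path-respecting family of pairwise disjoint antichains
    (q : ℕ) (Q : Fin q → Set V)
    (hQdisj : ∀ i j, i ≠ j → Disjoint (Q i) (Q j))
    (hQanti : ∀ i, IsAntichain (· < ·) (Q i))
    (hQpr : ∀ (i j : Fin q) (x y : V), x ∈ Q i → y ∈ Q j → x < y → i < j)
    (hQU : (⋃ i, Q i) = WQ)
    -- `φ` is a `Q`-compact topological order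
    (φ : V → ℕ) (hφinj : Function.Injective φ)
    (hφtopo : ∀ x y : V, x < y → φ x < φ y)
    (hφcomp : ∀ (i : Fin q) (x y z : V), x ∈ Q i → y ∈ Q i → z ∉ Q i →
      ¬(φ x < φ z ∧ φ z < φ y))
    (hφord : ∀ i j : Fin q, i < j → ∀ x ∈ Q i, ∀ y ∈ Q j, φ x < φ y)
    (u v : V) (hca : ∃ w : V, w ≤ u ∧ w ≤ v) :
    -- at least one candidate is defined
    ((∃ w ∈ WP, w ≤ u ∧ w ≤ v) ∨ (∃ w ∈ WQ, w ≤ u ∧ w ≤ v)) ∧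
    -- if only the P-candidate is defined, it is an LCA
    (∀ wP : V,
      (wP ∈ WP ∧ wP ≤ u ∧ wP ≤ v ∧ ∀ w' ∈ WP, w' ≤ u → w' ≤ v → φ w' ≤ φ wP) →
      ¬(∃ w ∈ WQ, w ≤ u ∧ w ≤ v) →
      IsLCA u v wP) ∧
    -- if only the Q-candidate is defined, it is an LCA
    (∀ (wQ : V) (i : Fin q),
      (wQ ∈ Q i ∧ wQ ≤ u ∧ wQ ≤ v ∧ ∀ j : Fin q, (∃ x ∈ Q j, x ≤ u ∧ x ≤ v) → j ≤ i) →
      ¬(∃ w ∈ WP, w ≤ u ∧ w ≤ v) →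
      IsLCA u v wQ) ∧
    -- if both candidates are defined, the one with the larger φ-label is an LCA
    (∀ (wP wQ : V) (i : Fin q),
      (wP ∈ WP ∧ wP ≤ u ∧ wP ≤ v ∧ ∀ w' ∈ WP, w' ≤ u → w' ≤ v → φ w' ≤ φ wP) →
      (wQ ∈ Q i ∧ wQ ≤ u ∧ wQ ≤ v ∧ ∀ j : Fin q, (∃ x ∈ Q j, x ≤ u ∧ x ≤ v) → j ≤ i) →
      (φ wQ ≤ φ wP → IsLCA u v wP) ∧ (φ wP ≤ φ wQ → IsLCA u v wQ)) := by
  have hcov : ∀ w : V, w ∈ WP ∨ ∃ j, w ∈ Q j := by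
    intro w
    have h : w ∈ WP ∪ WQ := by rw [hpart]; trivial
    rcases h with h | h
    · exact Or.inl h
    · rw [← hQU] at h
      exact Or.inr (Set.mem_iUnion.mp h)
  have hQW : ∀ (j : Fin q) (w : V), w ∈ Q j → w ∈ WQ := by
    intro j w h
    rw [← hQU]
    exact Set.mem_iUnion.mpr ⟨j, h⟩
  have hPQ : ∀ w : V, w ∈ WP → w ∈ WQ → False := fun w h1 h2 =>
    Set.disjoint_left.mp hdisjPQ h1 h2
  refine ⟨?_, ?_, ?_, ?_⟩
  · obtain ⟨w, hw⟩ := hca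
    rcases hcov w with h | ⟨j, h⟩
    · exact Or.inl ⟨w, h, hw⟩
    · exact Or.inr ⟨w, hQW j w h, hw⟩
  · rintro wP ⟨hP, hu, hv, hmax⟩ hno
    refine ⟨hu, hv, fun w' hlt hw' => ?_⟩
    rcases hcov w' with h | ⟨j, h⟩
    · exact absurd (hmax w' h hw'.1 hw'.2) (not_le.mpr (hφtopo _ _ hlt))
    · exact hno ⟨w', hQW j w' h, hw'⟩
  · rintro wQ i ⟨hQ, hu, hv, hmax⟩ hno
    refine ⟨hu, hv, fun w' hlt hw' => ?_⟩
    rcases hcov w' with h | ⟨j, h⟩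
    · exact hno ⟨w', h, hw'⟩
    · exact absurd (hmax j ⟨w', h, hw'⟩) (not_le.mpr (hQpr i j _ _ hQ h hlt))
  · rintro wP wQ i ⟨hP, hPu, hPv, hPmax⟩ ⟨hQ, hQu, hQv, hQmax⟩
    constructor
    · intro hle
      refine ⟨hPu, hPv, fun w' hlt hw' => ?_⟩
      have hφ := hφtopo _ _ hlt
      rcases hcov w' with h | ⟨j, h⟩
      · exact absurd (hPmax w' h hw'.1 hw'.2) (not_le.mpr hφ)
      · rcases (hQmax j ⟨w', h, hw'⟩).lt_or_eq with hji | rfl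
        · have := hφord j i hji w' h wQ hQ
          omega
        · have hnot : wP ∉ Q j := fun hh => hPQ wP hP (hQW j wP hh)
          have hne : φ wQ ≠ φ wP := fun he => hnot (hφinj he ▸ hQ)
          exact hφcomp j wQ w' wP hQ h hnot ⟨lt_of_le_of_ne hle hne, hφ⟩
    · intro hle
      refine ⟨hQu, hQv, fun w' hlt hw' => ?_⟩
      have hφ := hφtopo _ _ hlt
      rcases hcov w' with h | ⟨j, h⟩
      · have := hPmax w' h hw'.1 hw'.2
        omega
      · exact absurd (hQmax j ⟨w', h, hw'⟩) (not_le.mpr (hQpr i j _ _ hQ h hlt))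
end

section
/- There exist a finite set V with a strict partial order <, a partition of V into a set W_P that is a union of pairwise disjoint chains and a set W_Q that is the union of a path-respecting family of pairwise disjoint antichains, a topological order φ of (V, <) (not Q-compact), vertices u, v ∈ V, a W_P-restricted LCA w_P of (u, v) and a W_Q-restricted LCA w_Q of (u, v), such that the one of w_P, w_Q with the larger φ-label is NOT an LCA of (u, v) in (V, <). Hence combining chain-restricted and antichain-restricted LCAs by taking the φ-maximum fails for arbitrary topological orders. -/
/-- The strict order: `0 < 3, 4`, `1 < 2, 3, 4`, `2 < 3, 4`. -/
def ltB (a b : Fin 5) : Bool :=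
  (a == 0 && (b == 3 || b == 4)) || (a == 1 && (b == 2 || b == 3 || b == 4)) ||
    (a == 2 && (b == 3 || b == 4))

theorem stmt10 :
    ∃ (V : Type) (_ : Fintype V) (lt : V → V → Prop),
      -- `lt` is a strict partial order on `V`
      (∀ a : V, ¬ lt a a) ∧ (∀ a b c : V, lt a b → lt b c → lt a c) ∧
      ∃ (WP WQ : Set V) (pn qn : ℕ) (P : Fin pn → Set V) (Q : Fin qn → Set V)
        (φ : V → ℕ) (u v wP wQ : V),
        -- `WP, WQ` partition `V`
        WP ∪ WQ = Set.univ ∧ Disjoint WP WQ ∧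
        -- `WP` is a union of pairwise disjoint chains
        (∀ i j, i ≠ j → Disjoint (P i) (P j)) ∧
        (∀ i, IsChain lt (P i)) ∧
        (⋃ i, P i) = WP ∧
        -- `WQ` is the union of a path-respecting family of pairwise disjoint antichains
        (∀ i j, i ≠ j → Disjoint (Q i) (Q j)) ∧
        (∀ i, IsAntichain lt (Q i)) ∧
        (∀ (i j : Fin qn) (x y : V), x ∈ Q i → y ∈ Q j → lt x y → i < j) ∧
        (⋃ i, Q i) = WQ ∧
        -- `φ` is a topological order (not required to be Q-compact)
        Function.Injective φ ∧ (∀ x y : V, lt x y → φ x < φ y) ∧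
        -- `wP` is a `WP`-restricted LCA of `(u, v)`
        (wP ∈ WP ∧ (lt wP u ∨ wP = u) ∧ (lt wP v ∨ wP = v) ∧
          ∀ w' ∈ WP, lt wP w' → ¬((lt w' u ∨ w' = u) ∧ (lt w' v ∨ w' = v))) ∧
        -- `wQ` is a `WQ`-restricted LCA of `(u, v)`
        (wQ ∈ WQ ∧ (lt wQ u ∨ wQ = u) ∧ (lt wQ v ∨ wQ = v) ∧
          ∀ w' ∈ WQ, lt wQ w' → ¬((lt w' u ∨ w' = u) ∧ (lt w' v ∨ w' = v))) ∧
        -- the candidate with the larger φ-label is NOT an LCA of `(u, v)` in `(V, lt)`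
        ¬((lt (if φ wQ < φ wP then wP else wQ) u ∨ (if φ wQ < φ wP then wP else wQ) = u) ∧
          (lt (if φ wQ < φ wP then wP else wQ) v ∨ (if φ wQ < φ wP then wP else wQ) = v) ∧
          ∀ w' : V, lt (if φ wQ < φ wP then wP else wQ) w' →
            ¬((lt w' u ∨ w' = u) ∧ (lt w' v ∨ w' = v))) := by
  refine ⟨Fin 5, inferInstance,
    fun a b => ltB a b = true, by decide, by decide,
    {x | x = 1 ∨ x = 3 ∨ x = 4}, {x | x = 0 ∨ x = 2}, 2, 1,
    fun i => {x | (i = 0 ∧ (x = 1 ∨ x = 3)) ∨ (i = 1 ∧ x = 4)},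
    fun _ => {x | x = 0 ∨ x = 2},
    fun x => x.val, 3, 4, 1, 0, ?_, ?_, ?_, ?_, ?_, ?_, ?_, ?_, ?_, ?_, ?_, ?_, ?_, ?_⟩
  · ext x
    simp only [Set.mem_union, Set.mem_ofPred_eq, Set.mem_univ, iff_true]
    revert x; decide
  · rw [Set.disjoint_left]
    simp only [Set.mem_ofPred_eq]
    decide
  · simp only [Set.disjoint_left, Set.mem_ofPred_eq]
    decide
  · simp only [IsChain, Set.Pairwise, Set.mem_ofPred_eq]
    decide
  · ext x
    simp only [Set.mem_iUnion, Set.mem_ofPred_eq]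
    revert x; decide
  · intro i j h
    exact absurd (Subsingleton.elim i j) h
  · simp only [IsAntichain, Set.Pairwise, Set.mem_ofPred_eq, Pi.compl_apply, compl_iff_not]
    decide
  · simp only [Set.mem_ofPred_eq]
    decide
  · ext x
    simp only [Set.mem_iUnion, Set.mem_ofPred_eq]
    revert x; decide
  · exact Fin.val_injective
  · decide
  · simp only [Set.mem_ofPred_eq]
    decide
  · simp only [Set.mem_ofPred_eq]
    decide
  · decide
end
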